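/- Let k be a field and E = A#_f H a crossed product with convolution invertible cocycle f. Then the left global dimension of E satisfies gl.dim(E) ≤ gl.dim(A) + gl.dim(H), where gl.dim denotes the left global dimension (the supremum of projective dimensions of left modules). -/

import Mathlib

/-!
Global dimension is computed by injective dimensions. Let `N` be an `E`-module. The coaction
`a # h ↦ (a # h⁽¹⁾) ⊗ h⁽²⁾` of `H` on `E` turns `Hom_k(H, N)` into an `E`-module carrying a
commuting action of `H`, and `N` is recovered as `Hom_H(k, Hom_k(H, N))`. Since `f` is convolution
invertible, `e ⊗ h ↦ e (1 # h⁽¹⁾) ⊗ h⁽²⁾` is a bijection of `E ⊗ H`; hence `Hom_k(H, N)` is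
isomorphic to the coinduced module `Hom_A(E, N)`, whose injective dimension over `E` is at most
`gl.dim A` because `E ≅ A ⊗ H` is projective over `A`. The functor `Hom_H(-, Hom_k(H, N))` is exact
on the sequences of `H`-modules that split after `- ⊗ H`, so a projective resolution of the trivial
`H`-module `k` of length `gl.dim H` resolves `N` on the right by modules of injective dimension at
most `gl.dim A`.
-/

open TensorProduct

noncomputable section

namespace HopfCrossed

variable (k : Type) [CommRing k]

def TpowCat (V : ModuleCat k) : ℕ → ModuleCat k
  | 0 => ModuleCat.of k k
  | n + 1 => ModuleCat.of k (V ⊗[k] (TpowCat V n))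

abbrev Tpow (V : Type) [AddCommGroup V] [Module k V] (n : ℕ) : Type :=
  TpowCat k (ModuleCat.of k V) n

def tp {V : Type} [AddCommGroup V] [Module k V] : ∀ {n : ℕ}, (Fin n → V) → Tpow k V n
  | 0, _ => (1 : k)
  | _ + 1, v => (v 0) ⊗ₜ[k] (tp fun i => v i.succ)

section Coalg
variable {H : Type} [AddCommGroup H] [Module k H]

def itComul [Coalgebra k H] : ∀ n : ℕ, H →ₗ[k] Tpow k H (n + 1)
  | 0 => (TensorProduct.rid k H).symm.toLinearMap
  | n + 1 =>
      (TensorProduct.map LinearMap.id (itComul n)) ∘ₗ (Coalgebra.comul (R := k))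

def SRep [Coalgebra k H] (n : ℕ) (h : H) (N : ℕ) (u : Fin N → Fin (n + 1) → H) : Prop :=
  itComul k n h = ∑ i, tp k (u i)

def iterAct {A : Type} [AddCommGroup A] [Module k A]
    (act : H →ₗ[k] A →ₗ[k] A) : ∀ {s : ℕ}, (Fin s → H) → A → A
  | 0, _, a => a
  | _ + 1, h, a => act (h 0) (iterAct act (fun i => h i.succ) a)

end Coalg

/-- A weak action of a Hopf algebra `H` on a `k`-algebra `A` (Blattner–Cohen–Montgomery,
Doi–Takeuchi), written `act h a = a^h`. -/
structure WeakAction (k A H : Type) [CommRing k] [Ring A] [Algebra k A] [Ring H] [HopfAlgebra k H] : Type where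
  act : H →ₗ[k] A →ₗ[k] A
  act_mul : ∀ (h : H) (a b : A) (N : ℕ) (u : Fin N → Fin 2 → H), SRep k 1 h N u →
    act h (a * b) = ∑ i, act (u i 0) a * act (u i 1) b
  act_one : ∀ h : H, act h 1 = Coalgebra.counit (R := k) h • (1 : A)
  one_act : ∀ a : A, act 1 a = a

variable {A H : Type} [Ring A] [Algebra k A] [Ring H] [HopfAlgebra k H]
variable {k}

/-- Normality of the cocycle `f`. -/
def IsNormal (f : H →ₗ[k] H →ₗ[k] A) : Prop :=
  ∀ h : H, f h 1 = Coalgebra.counit (R := k) h • (1 : A) ∧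
    f 1 h = Coalgebra.counit (R := k) h • (1 : A)

/-- The cocycle condition
`f(l⁽¹⁾,m⁽¹⁾)^{h⁽¹⁾} f(h⁽²⁾, l⁽²⁾m⁽²⁾) = f(h⁽¹⁾,l⁽¹⁾) f(h⁽²⁾l⁽²⁾, m)`. -/
def IsCocycle (W : WeakAction k A H) (f : H →ₗ[k] H →ₗ[k] A) : Prop :=
  ∀ (h l m : H) (N₁ N₂ N₃ : ℕ) (u : Fin N₁ → Fin 2 → H) (v : Fin N₂ → Fin 2 → H)
    (w : Fin N₃ → Fin 2 → H),
    SRep k 1 h N₁ u → SRep k 1 l N₂ v → SRep k 1 m N₃ w →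
    (∑ i, ∑ j, ∑ p, W.act (u i 0) (f (v j 0) (w p 0)) * f (u i 1) (v j 1 * w p 1)) =
      ∑ i, ∑ j, f (u i 0) (v j 0) * f (u i 1 * v j 1) m

/-- The twisted module condition
`(a^{l⁽¹⁾})^{h⁽¹⁾} f(h⁽²⁾,l⁽²⁾) = f(h⁽¹⁾,l⁽¹⁾) a^{h⁽²⁾l⁽²⁾}`. -/
def IsTwistedModule (W : WeakAction k A H) (f : H →ₗ[k] H →ₗ[k] A) : Prop :=
  ∀ (h l : H) (a : A) (N₁ N₂ : ℕ) (u : Fin N₁ → Fin 2 → H) (v : Fin N₂ → Fin 2 → H),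
    SRep k 1 h N₁ u → SRep k 1 l N₂ v →
    (∑ i, ∑ j, W.act (u i 0) (W.act (v j 0) a) * f (u i 1) (v j 1)) =
      ∑ i, ∑ j, f (u i 0) (v j 0) * W.act (u i 1 * v j 1) a

variable (k A H) in
/-- A crossed product `E = A #_f H` of `A` by `H`:  a ring `E` identified with `A ⊗ H`
as a `k`-module, whose multiplication is given by the crossed product formula
`(a # h)(b # l) = a b^{h⁽¹⁾} f(h⁽²⁾,l⁽¹⁾) # h⁽³⁾ l⁽²⁾`. -/
structure CrossedProduct (E : Type) [Ring E] [Algebra k E] extends WeakAction k A H where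
  f : H →ₗ[k] H →ₗ[k] A
  ι : (A ⊗[k] H) ≃ₗ[k] E
  ι_one : ι (1 ⊗ₜ[k] 1) = 1
  ι_mul : ∀ (a b : A) (h l : H) (N M : ℕ) (u : Fin N → Fin 3 → H) (v : Fin M → Fin 2 → H),
    SRep k 2 h N u → SRep k 1 l M v →
    ι (a ⊗ₜ[k] h) * ι (b ⊗ₜ[k] l) =
      ∑ i, ∑ j, ι ((a * act (u i 0) b * f (u i 1) (v j 0)) ⊗ₜ[k] (u i 2 * v j 1))
  f_normal : IsNormal f
  f_cocycle : IsCocycle toWeakAction f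
  f_twisted : IsTwistedModule toWeakAction f

namespace CrossedProduct

variable {E : Type} [Ring E] [Algebra k E] (S : CrossedProduct k A H E)

/-- The canonical map `A → E`, `a ↦ a # 1`. -/
def aE : A →ₗ[k] E := S.ι.toLinearMap ∘ₗ (TensorProduct.mk k A H).flip 1

/-- The canonical map `H → E`, `h ↦ 1 # h`. -/
def hE : H →ₗ[k] E := S.ι.toLinearMap ∘ₗ (TensorProduct.mk k A H) 1

end CrossedProduct


/-- `IsConvInverse f g` says that `g` is the convolution inverse of `f` in the
convolution algebra `Hom_k(H ⊗ H, A)`. -/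
def IsConvInverse (f g : H →ₗ[k] H →ₗ[k] A) : Prop :=
  ∀ (h l : H) (N M : ℕ) (u : Fin N → Fin 2 → H) (v : Fin M → Fin 2 → H),
    SRep k 1 h N u → SRep k 1 l M v →
    (∑ i, ∑ j, f (u i 0) (v j 0) * g (u i 1) (v j 1)) =
        (Coalgebra.counit (R := k) h * Coalgebra.counit (R := k) l) • (1 : A) ∧
    (∑ i, ∑ j, g (u i 0) (v j 0) * f (u i 1) (v j 1)) =
        (Coalgebra.counit (R := k) h * Coalgebra.counit (R := k) l) • (1 : A)

/-- `PdLE R n M` : the left `R`-module `M` has projective dimension at most `n`. -/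
def PdLE (R : Type) [Ring R] : ℕ → ∀ (M : Type) [AddCommGroup M] [Module R M], Prop
  | 0, M, _, _ => Module.Projective R M
  | n + 1, M, _, _ => ∃ (P : Type) (_ : AddCommGroup P) (_ : Module R P)
      (p : P →ₗ[R] M), Module.Projective R P ∧ Function.Surjective p ∧
        PdLE R n (LinearMap.ker p)

/-- `GlDimLE R n` : the left global dimension of the ring `R` is at most `n`,
i.e. every left `R`-module has projective dimension at most `n`. -/
def GlDimLE (R : Type) [Ring R] (n : ℕ) : Prop :=
  ∀ (M : Type) [AddCommGroup M] [Module R M], PdLE R n M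

section InjectiveDimension

open CategoryTheory Limits

theorem pdLE_iff_hasProjectiveDimensionLE {R : Type} [Ring R] (n : ℕ) (M : Type) [AddCommGroup M]
    [Module R M] : PdLE R n M ↔ HasProjectiveDimensionLE (ModuleCat.of R M) n := by
  induction n generalizing M with
  | zero =>
    exact (IsProjective.iff_projective M).trans projective_iff_hasProjectiveDimensionLT_one
  | succ n ih =>
    constructor
    · rintro ⟨P, _, _, p, hP, hp, hker⟩
      have := (IsProjective.iff_projective P).1 hP
      exact ((LinearMap.shortExact_shortComplexKer hp).hasProjectiveDimensionLT_X₃_iff n this).2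
        ((ih _).1 hker)
    · intro h
      have hp := Finsupp.linearCombination_id_surjective R M
      have := (IsProjective.iff_projective (R := R) (M →₀ R)).1 inferInstance
      exact ⟨M →₀ R, inferInstance, inferInstance, Finsupp.linearCombination R id, inferInstance,
        hp, (ih _).2 (((LinearMap.shortExact_shortComplexKer hp).hasProjectiveDimensionLT_X₃_iff n
          this).1 h)⟩

theorem glDimLE_iff_hasInjectiveDimensionLE {R : Type} [Ring R] {n : ℕ} :
    GlDimLE R n ↔ ∀ M : ModuleCat.{0} R, HasInjectiveDimensionLE M n := by
  constructor
  · intro h M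
    refine (hasInjectiveDimensionLT_iff.{0} M (n + 1)).2 fun i hi Y e ↦ ?_
    have := (pdLE_iff_hasProjectiveDimensionLE n Y).1 (h Y)
    exact e.eq_zero_of_hasProjectiveDimensionLT (n + 1) hi
  · intro h M _ _
    refine (pdLE_iff_hasProjectiveDimensionLE n M).2
      ((hasProjectiveDimensionLT_iff.{0} _ (n + 1)).2 fun i hi Y e ↦ ?_)
    have := h Y
    exact e.eq_zero_of_hasInjectiveDimensionLT (n + 1) hi

section Linear

variable {R X Y Z : Type} [Ring R] [AddCommGroup X] [Module R X] [AddCommGroup Y] [Module R Y]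
  [AddCommGroup Z] [Module R Z] {n : ℕ}

theorem hasInjectiveDimensionLE_of_comp_eq_id {i : X →ₗ[R] Y} {r : Y →ₗ[R] X}
    (hri : r ∘ₗ i = LinearMap.id) (hY : HasInjectiveDimensionLE (ModuleCat.of R Y) n) :
    HasInjectiveDimensionLE (ModuleCat.of R X) n :=
  have : HasInjectiveDimensionLT (ModuleCat.of R Y) (n + 1) := hY
  Retract.hasInjectiveDimensionLT
    ⟨ModuleCat.ofHom i, ModuleCat.ofHom r, ModuleCat.hom_ext hri⟩ (n + 1)

theorem hasInjectiveDimensionLE_of_exact {f : X →ₗ[R] Y} {g : Y →ₗ[R] Z}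
    (hf : Function.Injective f) (hfg : Function.Exact f g) (hg : Function.Surjective g)
    (hY : HasInjectiveDimensionLE (ModuleCat.of R Y) (n + 1))
    (hZ : HasInjectiveDimensionLE (ModuleCat.of R Z) n) :
    HasInjectiveDimensionLE (ModuleCat.of R X) (n + 1) :=
  (ModuleCat.shortComplex_shortExact (ModuleCat.shortComplexOfCompEqZero f g
    hfg.linearMap_comp_eq_zero) hfg hf hg).hasInjectiveDimensionLT_X₁ (n + 1) hZ hY

end Linear

theorem hasInjectiveDimensionLE_obj {C D : Type*} [Category* C] [Category* D] [Abelian C]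
    [Abelian D] [EnoughInjectives C] (G : C ⥤ D) [G.PreservesZeroMorphisms]
    [PreservesFiniteLimits G] [G.PreservesEpimorphisms] [G.PreservesInjectiveObjects] {X : C}
    {n : ℕ} (h : HasInjectiveDimensionLE X n) : HasInjectiveDimensionLE (G.obj X) n := by
  induction n generalizing X with
  | zero =>
    have : Injective X := injective_iff_hasInjectiveDimensionLT_one.2 h
    exact injective_iff_hasInjectiveDimensionLT_one.1 (inferInstanceAs (Injective (G.obj X)))
  | succ n ih =>
    obtain ⟨⟨J, hJ, ι, hι⟩⟩ := EnoughInjectives.presentation X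
    have hS := ShortComplex.ShortExact.mk (ShortComplex.exact_cokernel ι)
    have := G.preservesHomology_of_preservesEpis_and_kernels
    exact ((hS.map G).hasInjectiveDimensionLT_X₃_iff n (inferInstanceAs (Injective (G.obj J)))).1
      (ih ((hS.hasInjectiveDimensionLT_X₃_iff n hJ).2 h))

theorem coextendScalars_preservesEpimorphisms {R S : Type} [Ring R] [Ring S] (f : R →+* S)
    (hS : Module.Projective R ((ModuleCat.restrictScalars f).obj (ModuleCat.of S S))) :
    (ModuleCat.coextendScalars.{0, 0, 0} f).PreservesEpimorphisms where
  preserves {X Y} g hg := by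
    refine (ModuleCat.epi_iff_surjective _).2 fun φ ↦ ?_
    obtain ⟨ψ, hψ⟩ := Module.projective_lifting_property g.hom
      (ModuleCat.CoextendScalars.equiv f Y φ) ((ModuleCat.epi_iff_surjective g).1 hg)
    exact ⟨(ModuleCat.CoextendScalars.equiv f X).symm ψ, ModuleCat.CoextendScalars.ext hψ⟩

theorem hasInjectiveDimensionLE_coextendScalars {R S : Type} [Ring R] [Ring S] (f : R →+* S)
    (hS : Module.Projective R ((ModuleCat.restrictScalars f).obj (ModuleCat.of S S)))
    {X : ModuleCat.{0} R} {n : ℕ} (h : HasInjectiveDimensionLE X n) :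
    HasInjectiveDimensionLE ((ModuleCat.coextendScalars f).obj X) n := by
  have adj := ModuleCat.restrictCoextendScalarsAdj.{0, 0, 0} f
  have := coextendScalars_preservesEpimorphisms f hS
  have := adj.rightAdjoint_preservesLimits
  have := Functor.preservesInjectiveObjects_of_adjunction_of_preservesMonomorphisms adj
  exact hasInjectiveDimensionLE_obj _ h

end InjectiveDimension

section ConvolutionTwist

open Coalgebra LinearMap WithConv

variable {B C : Type} [Ring B] [Algebra k B] [AddCommGroup C] [Module k C] [Coalgebra k C]

/-- The `B`-linear endomorphism `b ⊗ c ↦ b F(c⁽¹⁾) ⊗ c⁽²⁾` of `B ⊗ C`; convolution of the maps `F`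
corresponds to composition (in the opposite order) of these endomorphisms. -/
def leftTwist (F : WithConv (C →ₗ[k] B)) : B ⊗[k] C →ₗ[B] B ⊗[k] C :=
  AlgebraTensorModule.lift (toSpanSingleton B _ (F.ofConv.rTensor C ∘ₗ comul))

theorem leftTwist_tmul (F : WithConv (C →ₗ[k] B)) (b : B) {c : C} {ι : Type} (r : Repr k c ι) :
    leftTwist F (b ⊗ₜ c) = ∑ i ∈ r.index, (b * F (r.left i)) ⊗ₜ[k] r.right i := by
  simp [leftTwist, ← r.eq, Finset.smul_sum, smul_tmul']

theorem leftTwist_comp (F G : WithConv (C →ₗ[k] B)) :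
    leftTwist G ∘ₗ leftTwist F = leftTwist (F * G) := by
  ext c
  have hcoassoc := congrArg
    ((mul' k B ∘ₗ map F.ofConv G.ofConv).rTensor C ∘ₗ (TensorProduct.assoc k C C C).symm)
    (sum_tmul_tmul_eq (ℛ k c) (fun i ↦ ℛ k ((ℛ k c).left i)) (fun i ↦ ℛ k ((ℛ k c).right i)))
  simp only [map_sum, LinearMap.comp_apply, LinearEquiv.coe_coe, TensorProduct.assoc_symm_tmul,
    rTensor_tmul, map_tmul, mul'_apply] at hcoassoc
  simp [leftTwist_tmul _ _ (ℛ k c), (ℛ k _).convMul_apply, sum_tmul,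
    fun i ↦ leftTwist_tmul G (F ((ℛ k c).left i)) (ℛ k ((ℛ k c).right i)), hcoassoc]

theorem leftTwist_one : leftTwist (1 : WithConv (C →ₗ[k] B)) = LinearMap.id := by
  ext c
  have hcounit := congrArg ((toSpanSingleton k B 1).rTensor C) (sum_counit_tmul_eq (ℛ k c))
  simp only [map_sum, rTensor_tmul, toSpanSingleton_apply, one_smul] at hcounit
  simpa [leftTwist_tmul _ _ (ℛ k c), Algebra.algebraMap_eq_smul_one] using hcounit

theorem leftTwist_bijective {F : WithConv (C →ₗ[k] B)} (hF : IsUnit F) :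
    Function.Bijective (leftTwist F) := by
  obtain ⟨⟨F, G, hFG, hGF⟩, rfl⟩ := hF
  refine Function.bijective_iff_has_inverse.2 ⟨leftTwist G,
    LinearMap.congr_fun (?_ : leftTwist G ∘ₗ leftTwist F = LinearMap.id),
    LinearMap.congr_fun (?_ : leftTwist F ∘ₗ leftTwist G = LinearMap.id)⟩
  · rw [leftTwist_comp, hFG, leftTwist_one]
  · rw [leftTwist_comp, hGF, leftTwist_one]

/-- The endomorphism `c ⊗ b ↦ c⁽¹⁾ ⊗ F(c⁽²⁾) b` of `C ⊗ B`; convolution of the maps `F` corresponds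
to composition of these endomorphisms. -/
def rightTwist (F : WithConv (C →ₗ[k] B)) : C ⊗[k] B →ₗ[k] C ⊗[k] B :=
  (mul' k B).lTensor C ∘ₗ (TensorProduct.assoc k C B B).toLinearMap ∘ₗ
    (F.ofConv.lTensor C ∘ₗ comul).rTensor B

theorem rightTwist_tmul (F : WithConv (C →ₗ[k] B)) (b : B) {c : C} {ι : Type} (r : Repr k c ι) :
    rightTwist F (c ⊗ₜ b) = ∑ i ∈ r.index, r.left i ⊗ₜ[k] (F (r.right i) * b) := by
  simp [rightTwist, ← r.eq, sum_tmul]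

theorem rightTwist_comp (F G : WithConv (C →ₗ[k] B)) :
    rightTwist F ∘ₗ rightTwist G = rightTwist (F * G) := by
  ext c b
  have hcoassoc := congrArg
    ((mulRight k b ∘ₗ mul' k B ∘ₗ map F.ofConv G.ofConv).lTensor C)
    (sum_tmul_tmul_eq (ℛ k c) (fun i ↦ ℛ k ((ℛ k c).left i)) (fun i ↦ ℛ k ((ℛ k c).right i)))
  simp only [map_sum, LinearMap.comp_apply, lTensor_tmul, map_tmul, mul'_apply,
    mulRight_apply] at hcoassoc
  simp [rightTwist_tmul _ _ (ℛ k c), (ℛ k _).convMul_apply, Finset.sum_mul, tmul_sum, ← mul_assoc,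
    fun i ↦ rightTwist_tmul F (G ((ℛ k c).right i) * b) (ℛ k ((ℛ k c).left i)), hcoassoc]

theorem rightTwist_one : rightTwist (1 : WithConv (C →ₗ[k] B)) = LinearMap.id := by
  ext c b
  have hcounit := congrArg ((toSpanSingleton k B b).lTensor C) (sum_tmul_counit_eq (ℛ k c))
  simp only [map_sum, lTensor_tmul, toSpanSingleton_apply, one_smul] at hcounit
  simpa [rightTwist_tmul _ _ (ℛ k c), ← Algebra.smul_def] using hcounit

theorem rightTwist_bijective {F : WithConv (C →ₗ[k] B)} (hF : IsUnit F) :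
    Function.Bijective (rightTwist F) := by
  obtain ⟨⟨F, G, hFG, hGF⟩, rfl⟩ := hF
  refine Function.bijective_iff_has_inverse.2 ⟨rightTwist G,
    LinearMap.congr_fun (?_ : rightTwist G ∘ₗ rightTwist F = LinearMap.id),
    LinearMap.congr_fun (?_ : rightTwist F ∘ₗ rightTwist G = LinearMap.id)⟩
  · rw [rightTwist_comp, hGF, rightTwist_one]
  · rw [rightTwist_comp, hFG, rightTwist_one]

end ConvolutionTwist

section DiagonalTensor

open Coalgebra HopfAlgebra LinearMap WithConv

variable {V W M : Type} [AddCommGroup V] [Module k V] [Module H V] [IsScalarTower k H V]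
  [AddCommGroup W] [Module k W] [Module H W] [IsScalarTower k H W]
  [AddCommGroup M] [Module k M] [Module H M]

variable (k H) in
/-- The tensor product `V ⊗ H` of `H`-modules, on which `H` acts diagonally. It is a type synonym
because `V ⊗[k] H` itself carries the action of `H` on the left factor. -/
def DiagonalTensor (V : Type) [AddCommGroup V] [Module k V] : Type := V ⊗[k] H

namespace DiagonalTensor

instance (V : Type) [AddCommGroup V] [Module k V] : AddCommGroup (DiagonalTensor k H V) :=
  inferInstanceAs (AddCommGroup (V ⊗[k] H))

instance (V : Type) [AddCommGroup V] [Module k V] : Module k (DiagonalTensor k H V) :=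
  inferInstanceAs (Module k (V ⊗[k] H))

variable (k H V) in
/-- The diagonal action `h ↦ (v ⊗ x ↦ h⁽¹⁾ v ⊗ h⁽²⁾ x)` of `H` on `V ⊗ H`. -/
def action : H →ₐ[k] Module.End k (V ⊗[k] H) :=
  (Module.endTensorEndAlgHom (R := k) (S := k) (A := k)).comp
    ((Algebra.TensorProduct.map (Algebra.lsmul k k V) (Algebra.lsmul k k H)).comp
      (Bialgebra.comulAlgHom k H))

instance : Module H (DiagonalTensor k H V) := Module.compHom (V ⊗[k] H) (action k H V).toRingHom

instance : IsScalarTower k H (DiagonalTensor k H V) where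
  smul_assoc c h y := LinearMap.congr_fun (map_smul (action k H V) c h) y

/-- The pure tensors, as elements of `DiagonalTensor k H V`. -/
def mk : V →ₗ[k] H →ₗ[k] DiagonalTensor k H V := TensorProduct.mk k V H

@[elab_as_elim]
theorem induction_on {V : Type} [AddCommGroup V] [Module k V] {p : DiagonalTensor k H V → Prop}
    (y : DiagonalTensor k H V) (zero : p 0) (mk : ∀ v x, p (mk v x))
    (add : ∀ y z, p y → p z → p (y + z)) : p y :=
  TensorProduct.induction_on y zero mk add

theorem smul_mk (h : H) (v : V) (x : H) {ι : Type} (r : Repr k h ι) :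
    h • (mk v x : DiagonalTensor k H V) = ∑ i ∈ r.index, mk (r.left i • v) (r.right i * x) := by
  change action k H V h (v ⊗ₜ[k] x) = ∑ i ∈ r.index, (r.left i • v) ⊗ₜ[k] (r.right i * x)
  simp only [action, AlgHom.comp_apply, Bialgebra.comulAlgHom_apply, ← r.eq, map_sum,
    LinearMap.sum_apply, Algebra.TensorProduct.map_tmul, Module.endTensorEndAlgHom_apply]
  rfl

/-- The `H`-linear map on `DiagonalTensor k H V` given by a `k`-bilinear map that is compatible with
the diagonal action. -/
def lift (g : V →ₗ[k] H →ₗ[k] M)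
    (hg : ∀ (h : H) (v : V) (x : H), ∑ i ∈ (ℛ k h).index,
      g ((ℛ k h).left i • v) ((ℛ k h).right i * x) = h • g v x) :
    DiagonalTensor k H V →ₗ[H] M where
  toFun := TensorProduct.lift g
  map_add' := map_add (TensorProduct.lift g)
  map_smul' h y := by
    let g' : DiagonalTensor k H V →ₗ[k] M := TensorProduct.lift g
    change g' (h • y) = h • g' y
    induction y using induction_on with
    | zero => simp only [smul_zero, map_zero]
    | mk v x => simp only [smul_mk h v x (ℛ k h), map_sum]; exact hg h v x
    | add y z hy hz => simp only [smul_add, map_add, hy, hz]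

/-- Functoriality of `DiagonalTensor k H V` in `V`. -/
def map (g : V →ₗ[H] W) : DiagonalTensor k H V →ₗ[H] DiagonalTensor k H W :=
  lift (mk ∘ₗ g.restrictScalars k) fun h v x ↦ by
    simp only [LinearMap.comp_apply, coe_restrictScalars, map_smul, smul_mk h _ x (ℛ k h)]

theorem sum_smul_mk_antipode_mul (h : H) (v : V) (x : H) :
    ∑ i ∈ (ℛ k h).index, (ℛ k h).left i •
      (mk v (antipode k ((ℛ k h).right i) * x) : DiagonalTensor k H V) = mk (h • v) x := by
  have htwist := congrArg (((toSpanSingleton H V v).restrictScalars k).rTensor H)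
    (LinearMap.congr_fun (rightTwist_comp (toConv LinearMap.id) (toConv (antipode k))) (h ⊗ₜ[k] x))
  rw [id_mul_antipode, rightTwist_one, LinearMap.comp_apply,
    rightTwist_tmul _ _ (ℛ k h), map_sum, map_sum] at htwist
  refine Eq.trans (Finset.sum_congr rfl fun i _ ↦ ?_) htwist
  rw [smul_mk _ v _ (ℛ k ((ℛ k h).left i)), rightTwist_tmul _ _ (ℛ k ((ℛ k h).left i)), map_sum]
  rfl

/-- The `H`-linear map `x ⊗ y ↦ x⁽¹⁾ ⊗ x⁽²⁾ y` from the `H`-module induced from the `k`-module `H`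
to the diagonal tensor product of `H` with itself. -/
def ofInduced : H ⊗[k] H →ₗ[H] DiagonalTensor k H H :=
  AlgebraTensorModule.lift (toSpanSingleton H (H →ₗ[k] DiagonalTensor k H H) (mk 1))

theorem ofInduced_bijective : Function.Bijective (ofInduced (k := k) (H := H)) := by
  have hunit : IsUnit (toConv (LinearMap.id : H →ₗ[k] H)) :=
    ⟨⟨_, _, id_mul_antipode, antipode_mul_id⟩, rfl⟩
  have htwist (t : H ⊗[k] H) :
      ofInduced t = rightTwist (toConv (LinearMap.id : H →ₗ[k] H)) t := by
    induction t with
    | zero => simp only [map_zero]; rfl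
    | tmul x y =>
      refine (smul_mk x 1 y (ℛ k x)).trans (Eq.trans ?_ (rightTwist_tmul _ y (ℛ k x)).symm)
      simp only [smul_eq_mul, mul_one]
      rfl
    | add t u ht hu => simp only [map_add, ht, hu]; rfl
  exact (funext htwist : ⇑ofInduced = _) ▸ rightTwist_bijective hunit

theorem projective_self [Module.Projective k H] :
    Module.Projective H (DiagonalTensor k H H) :=
  .of_equiv (LinearEquiv.ofBijective ofInduced ofInduced_bijective)

/-- The comparison map `⨁ₓ (Vₓ ⊗ H) → (⨁ₓ Vₓ) ⊗ H` for a constant family `Vₓ = V`. -/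
def ofFinsupp (X : Type) : (X →₀ DiagonalTensor k H V) →ₗ[H] DiagonalTensor k H (X →₀ V) :=
  Finsupp.lsum ℕ fun x ↦ map (Finsupp.lsingle x)

theorem ofFinsupp_bijective (X : Type) :
    Function.Bijective (ofFinsupp X : _ →ₗ[H] DiagonalTensor k H (X →₀ V)) := by
  classical
  let e : (X →₀ DiagonalTensor k H V) ≃+ DiagonalTensor k H (X →₀ V) :=
    (TensorProduct.finsuppLeft k k V H X).symm.toAddEquiv
  have hequiv (t) : ofFinsupp X t = e t := by
    induction t using Finsupp.induction_linear with
    | zero => simp only [map_zero]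
    | single x t =>
      refine (Finsupp.lsum_single ..).trans ?_
      induction t using induction_on with
      | zero => simp only [Finsupp.single_zero, map_zero]
      | mk v y => exact (TensorProduct.finsuppLeft_symm_apply_single x v y).symm
      | add t u ht hu => simp only [Finsupp.single_add, map_add, ht, hu]
    | add t u ht hu => simp only [map_add, ht, hu]
  exact (funext hequiv : ⇑(ofFinsupp X) = e) ▸ e.bijective

theorem projective [Module.Projective k H] (hV : Module.Projective H V) :
    Module.Projective H (DiagonalTensor k H V) := by
  classical
  have := projective_self (k := k) (H := H)
  have : Module.Projective H (V →₀ DiagonalTensor k H H) :=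
    .of_equiv (finsuppLEquivDirectSum H (DiagonalTensor k H H) V).symm
  have : Module.Projective H (DiagonalTensor k H (V →₀ H)) :=
    .of_equiv (LinearEquiv.ofBijective (ofFinsupp V) (ofFinsupp_bijective V))
  obtain ⟨s, hs⟩ := hV.out
  refine .of_split (map s) (map (Finsupp.linearCombination H _root_.id)) (LinearMap.ext fun y ↦ ?_)
  induction y using induction_on with
  | zero => simp only [map_zero]
  | mk v x => exact congrArg (mk · x) (hs v)
  | add y z hy hz => simp only [map_add, hy, hz]

theorem exists_leftInverse_map [Module.Flat k H] {i : V →ₗ[H] W} {X : Type} [AddCommGroup X]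
    [Module k X] [Module H X] [IsScalarTower k H X] {p : W →ₗ[H] X}
    (hi : Function.Injective i) (hp : Function.Surjective p) (hip : Function.Exact i p)
    (hX : Module.Projective H (DiagonalTensor k H X)) :
    ∃ r : DiagonalTensor k H W →ₗ[H] DiagonalTensor k H V, r ∘ₗ map i = LinearMap.id := by
  have hmap_i : Function.Injective (map i : DiagonalTensor k H V →ₗ[H] DiagonalTensor k H W) :=
    Module.Flat.rTensor_preserves_injective_linearMap (i.restrictScalars k) hi
  have hmap_p : Function.Surjective (map p : DiagonalTensor k H W →ₗ[H] DiagonalTensor k H X) :=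
    LinearMap.rTensor_surjective H (g := p.restrictScalars k) hp
  have hmap_ip : Function.Exact (map i : DiagonalTensor k H V →ₗ[H] DiagonalTensor k H W) (map p) :=
    rTensor_exact H (f := i.restrictScalars k) (g := p.restrictScalars k) hip hp
  obtain ⟨s, hs⟩ := Module.projective_lifting_property (map p) LinearMap.id hmap_p
  have hsplit := hmap_ip.split_tfae'.out 0 1
  exact (hsplit.1 ⟨hmap_i, s, hs⟩ : _ ∧ ∃ r, r ∘ₗ map i = LinearMap.id).2

end DiagonalTensor

/-- The `k`-module `N` regarded as an `H`-module on which `H` acts through the counit. -/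
@[nolint unusedArguments]
def TrivialModule (_k _H N : Type) : Type := N

namespace TrivialModule

variable {N : Type} [AddCommGroup N] [Module k N]

instance : AddCommGroup (TrivialModule k H N) := inferInstanceAs (AddCommGroup N)

instance : Module k (TrivialModule k H N) := inferInstanceAs (Module k N)

instance : Module H (TrivialModule k H N) :=
  Module.compHom N (Bialgebra.counitAlgHom k H).toRingHom

variable (k H N) in
/-- The identity map, from `N` to the trivial `H`-module on `N`. -/
def of : N ≃ₗ[k] TrivialModule k H N := LinearEquiv.refl k N

theorem smul_def (h : H) (n : TrivialModule k H N) : h • n = counit (R := k) h • n := rfl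

instance : IsScalarTower k H (TrivialModule k H N) where
  smul_assoc c h n := by simp only [smul_def, map_smul, smul_assoc]

end TrivialModule

namespace DiagonalTensor

variable {N : Type} [AddCommGroup N] [Module k N]

theorem smul_mk_trivialModule (h : H) (n : TrivialModule k H N) (x : H) :
    h • (mk n x : DiagonalTensor k H (TrivialModule k H N)) = mk n (h * x) := by
  simp only [smul_mk h n x (ℛ k h), TrivialModule.smul_def, map_smul, LinearMap.smul_apply]
  simp only [← map_smul, ← map_sum, ← smul_mul_assoc, ← Finset.sum_mul, sum_counit_smul]

theorem projective_trivialModule :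
    Module.Projective H (DiagonalTensor k H (TrivialModule k H k)) := by
  let e : H ≃ DiagonalTensor k H (TrivialModule k H k) := (TensorProduct.lid k H).symm.toEquiv
  let g := toSpanSingleton H (DiagonalTensor k H (TrivialModule k H k))
    (mk (TrivialModule.of k H k 1) 1)
  have hg (x : H) : g x = e x :=
    (smul_mk_trivialModule x _ 1).trans (congrArg (mk (TrivialModule.of k H k 1)) (mul_one x))
  exact .of_equiv (LinearEquiv.ofBijective g ((funext hg : ⇑g = e) ▸ e.bijective))

end DiagonalTensor

end DiagonalTensor

section LinearMapModules

variable {R S V M : Type} [Ring R] [Ring S] [AddCommGroup V] [Module R V] [AddCommGroup M]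
  [Module R M] [Module S M] [SMulCommClass R S M]

theorem exists_linearMap_retract_pi (hV : Module.Projective R V) :
    ∃ (i : (V →ₗ[R] M) →ₗ[S] (V → M)) (r : (V → M) →ₗ[S] (V →ₗ[R] M)), r ∘ₗ i = LinearMap.id := by
  obtain ⟨s, hs⟩ := hV.out
  let e : ((V →₀ R) →ₗ[R] M) ≃ₗ[S] (V → M) :=
    (Finsupp.lsum S).symm ≪≫ₗ .piCongrRight fun _ ↦ LinearMap.ringLmapEquivSelf R S M
  refine ⟨e ∘ₗ LinearMap.lcomp S M (Finsupp.linearCombination R _root_.id),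
    LinearMap.lcomp S M s ∘ₗ e.symm, ?_⟩
  ext φ v
  simp only [LinearMap.comp_apply, LinearEquiv.coe_coe, e.symm_apply_apply, LinearMap.lcomp_apply,
    hs v, LinearMap.id_apply]

theorem exact_lcomp {X Y : Type} [AddCommGroup X] [Module R X] [AddCommGroup Y] [Module R Y]
    {f : X →ₗ[R] Y} {g : Y →ₗ[R] V} (hfg : Function.Exact f g) (hg : Function.Surjective g) :
    Function.Exact (LinearMap.lcomp S M g) (LinearMap.lcomp S M f) := fun φ ↦ by
  refine ⟨fun hφ ↦ ?_, ?_⟩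
  · refine ⟨(LinearMap.range f).liftQ φ (LinearMap.range_le_ker_iff.2 hφ) ∘ₗ
      (hfg.linearEquivOfSurjective hg).symm.toLinearMap, ?_⟩
    ext x
    simp
  · rintro ⟨ψ, rfl⟩
    simp only [LinearMap.lcomp_apply', LinearMap.comp_assoc, hfg.linearMap_comp_eq_zero,
      LinearMap.comp_zero]

end LinearMapModules

section CoactionHom

open Coalgebra HopfAlgebra LinearMap

variable {E : Type} [Ring E] [Algebra k E]

/-- The `k`-module `Hom_k(H, N)`, on which `E` acts through the coaction `ρ` by
`(e • φ)(x) = e⁽⁰⁾ φ(x e⁽¹⁾)` if `N` is an `E`-module, and `H` acts by `(h • φ)(x) = φ(S(h) x)`. -/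
def CoactionHom (_ρ : E →ₐ[k] E ⊗[k] H) (N : Type) [AddCommGroup N] [Module k N] : Type :=
  H →ₗ[k] N

namespace CoactionHom

variable {ρ : E →ₐ[k] E ⊗[k] H} {N : Type} [AddCommGroup N] [Module k N]

instance : AddCommGroup (CoactionHom ρ N) := inferInstanceAs (AddCommGroup (H →ₗ[k] N))

instance : Module k (CoactionHom ρ N) := inferInstanceAs (Module k (H →ₗ[k] N))

instance : FunLike (CoactionHom ρ N) H N := inferInstanceAs (FunLike (H →ₗ[k] N) H N)

instance : LinearMapClass (CoactionHom ρ N) k H N :=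
  inferInstanceAs (LinearMapClass (H →ₗ[k] N) k H N)

@[ext]
theorem ext {φ ψ : CoactionHom ρ N} (h : ∀ x, φ x = ψ x) : φ = ψ := DFunLike.ext φ ψ h

variable (k H N) in
/-- The action of `H` on `Hom_k(H, N)` by right translation. -/
def translate : H →ₐ[k] Module.End k (H →ₗ[k] N) :=
  AlgHom.ofLinearMap ((llcomp k H H N).flip ∘ₗ (LinearMap.mul k H).flip)
    (by ext; simp) (fun h h' ↦ by ext; simp [mul_assoc])

variable (k H E N) in
/-- The action `((e ⊗ h) φ)(x) = e φ(x h)` of `E ⊗ H` on `Hom_k(H, N)`. -/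
def tensorAction [Module E N] [IsScalarTower k E N] : E ⊗[k] H →ₐ[k] Module.End k (H →ₗ[k] N) :=
  Algebra.TensorProduct.lift (Algebra.lsmul k k _) (translate k H N) fun e h ↦ by
    ext; simp [translate]

theorem tensorAction_tmul [Module E N] [IsScalarTower k E N] (e : E) (h x : H) (φ : H →ₗ[k] N) :
    tensorAction k H E N (e ⊗ₜ h) φ x = e • φ (x * h) := by
  simp [tensorAction, translate]

instance [Module E N] [IsScalarTower k E N] : Module E (CoactionHom ρ N) :=
  Module.compHom (H →ₗ[k] N) ((tensorAction k H E N).comp ρ).toRingHom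

theorem smul_apply_eq_sum [Module E N] [IsScalarTower k E N] {e : E} {κ : Type} {s : Finset κ}
    {u : κ → E} {v : κ → H} (he : ρ e = ∑ i ∈ s, u i ⊗ₜ v i) (φ : CoactionHom ρ N) (x : H) :
    (e • φ) x = ∑ i ∈ s, u i • φ (x * v i) := by
  have hsum (φ : H →ₗ[k] N) : tensorAction k H E N (ρ e) φ x = ∑ i ∈ s, u i • φ (x * v i) := by
    simp only [he, map_sum, LinearMap.sum_apply, tensorAction_tmul]
  exact hsum φ

instance : Module H (CoactionHom ρ N) where
  smul h φ := (φ : H →ₗ[k] N) ∘ₗ mulLeft k (antipode k h)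
  one_smul φ := ext fun x ↦ by
    change φ (antipode k 1 * x) = φ x
    rw [antipode_one, one_mul]
  mul_smul h h' φ := ext fun x ↦ by
    change φ (antipode k (h * h') * x) = φ (antipode k h' * (antipode k h * x))
    rw [antipode_mul_antidistrib, mul_assoc]
  smul_zero h := rfl
  smul_add h φ ψ := rfl
  add_smul h h' φ := ext fun x ↦ by
    change φ (antipode k (h + h') * x) = φ (antipode k h * x) + φ (antipode k h' * x)
    rw [map_add, add_mul, map_add]
  zero_smul φ := ext fun x ↦ by
    change φ (antipode k 0 * x) = 0
    rw [map_zero, zero_mul, map_zero]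

theorem smul_apply (h : H) (φ : CoactionHom ρ N) (x : H) : (h • φ) x = φ (antipode k h * x) := rfl

instance : IsScalarTower k H (CoactionHom ρ N) where
  smul_assoc c h φ := ext fun x ↦ by
    change φ (antipode k (c • h) * x) = c • φ (antipode k h * x)
    rw [map_smul, smul_mul_assoc, map_smul]

instance [Module E N] [IsScalarTower k E N] : SMulCommClass H E (CoactionHom ρ N) where
  smul_comm h e φ := ext fun x ↦ by
    obtain ⟨n, u, v, he⟩ := TensorProduct.exists_sum_tmul_eq (ρ e)
    simp only [smul_apply_eq_sum he, smul_apply, mul_assoc]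

/-- `Hom_k(H, -)` commutes with powers. -/
def piEquiv (ρ : E →ₐ[k] E ⊗[k] H) (N X : Type) [AddCommGroup N] [Module k N] [Module E N]
    [IsScalarTower k E N] : CoactionHom ρ (X → N) ≃ₗ[E] (X → CoactionHom ρ N) where
  toFun φ w := (LinearMap.proj w : (X → N) →ₗ[k] N) ∘ₗ (φ : H →ₗ[k] X → N)
  invFun φ := LinearMap.pi fun w ↦ (φ w : H →ₗ[k] N)
  left_inv _ := rfl
  right_inv _ := rfl
  map_add' _ _ := rfl
  map_smul' e φ := funext fun w ↦ ext fun x ↦ by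
    obtain ⟨n, u, v, he⟩ := TensorProduct.exists_sum_tmul_eq (ρ e)
    let φw : CoactionHom ρ N := (LinearMap.proj w : (X → N) →ₗ[k] N) ∘ₗ (φ : H →ₗ[k] X → N)
    exact (congrFun (smul_apply_eq_sum he φ x) w).trans
      ((Finset.sum_apply ..).trans (smul_apply_eq_sum he φw x).symm)

section Curry

variable {V W : Type} [AddCommGroup V] [Module k V] [Module H V] [IsScalarTower k H V]
  [AddCommGroup W] [Module k W] [Module H W] [IsScalarTower k H W]

/-- The `H`-invariant functional on `V ⊗ H` corresponding to an `H`-linear map `V → Hom_k(H, N)`. -/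
def uncurry (φ : V →ₗ[H] CoactionHom ρ N) : DiagonalTensor k H V →ₗ[H] TrivialModule k H N :=
  DiagonalTensor.lift (M := TrivialModule k H N) (φ.restrictScalars k : V →ₗ[k] CoactionHom ρ N)
    fun h v x ↦ by
    have hφ (i) : (φ ((ℛ k h).left i • v) ((ℛ k h).right i * x) : N) =
        φ v (antipode k ((ℛ k h).left i) * (ℛ k h).right i * x) := by
      rw [map_smul, smul_apply, mul_assoc]
    refine (Finset.sum_congr rfl fun i _ ↦ hφ i).trans ?_
    rw [← map_sum (φ v), ← Finset.sum_mul, sum_antipode_mul_eq_smul, smul_mul_assoc, one_mul,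
      map_smul]
    rfl

/-- The `H`-linear map `V → Hom_k(H, N)` corresponding to an `H`-invariant functional on `V ⊗ H`. -/
def curry (ψ : DiagonalTensor k H V →ₗ[H] TrivialModule k H N) : V →ₗ[H] CoactionHom ρ N where
  toFun v := (ψ.restrictScalars k ∘ₗ DiagonalTensor.mk v : H →ₗ[k] TrivialModule k H N)
  map_add' v w := ext fun x ↦ by
    change ψ (DiagonalTensor.mk (v + w) x) = ψ (DiagonalTensor.mk v x) + ψ (DiagonalTensor.mk w x)
    rw [map_add, LinearMap.add_apply, map_add]
  map_smul' h v := ext fun x ↦ by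
    change ψ (DiagonalTensor.mk (h • v) x) = ψ (DiagonalTensor.mk v (antipode k h * x))
    have hcounit := congrArg (fun y ↦ ψ (DiagonalTensor.mk v (antipode k y * x)))
      (sum_counit_smul (ℛ k h))
    simp only [map_sum, map_smul, Finset.sum_mul, smul_mul_assoc, map_smul_of_tower] at hcounit
    rw [← DiagonalTensor.sum_smul_mk_antipode_mul, ← hcounit]
    simp only [map_sum, map_smul, TrivialModule.smul_def]

theorem exists_comp_eq_of_leftInverse_map {i : V →ₗ[H] W}
    {r : DiagonalTensor k H W →ₗ[H] DiagonalTensor k H V}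
    (hr : r ∘ₗ DiagonalTensor.map i = LinearMap.id) (φ : V →ₗ[H] CoactionHom ρ N) :
    ∃ φ' : W →ₗ[H] CoactionHom ρ N, φ' ∘ₗ i = φ := by
  refine ⟨curry (uncurry φ ∘ₗ r), LinearMap.ext fun v ↦ ext fun x ↦ ?_⟩
  exact congrArg (uncurry φ) (LinearMap.congr_fun hr (DiagonalTensor.mk v x))

end Curry

section Extend

variable [Module E N] [IsScalarTower k E N]

/-- The extension `e ⊗ h ↦ e φ(h)` of a `k`-linear map `φ : H → N` to an `E`-linear map
`E ⊗ H → N`. -/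
def extend (φ : CoactionHom ρ N) : E ⊗[k] H →ₗ[E] N :=
  AlgebraTensorModule.lift (LinearMap.toSpanSingleton E (H →ₗ[k] N) φ)

theorem extend_tmul (φ : CoactionHom ρ N) (e : E) (h : H) : φ.extend (e ⊗ₜ h) = e • φ h := rfl

theorem extend_injective :
    Function.Injective (extend : CoactionHom ρ N → E ⊗[k] H →ₗ[E] N) := fun φ φ' h ↦ ext fun x ↦ by
  simpa only [extend_tmul, one_smul] using LinearMap.congr_fun h (1 ⊗ₜ x)

theorem extend_surjective :
    Function.Surjective (extend : CoactionHom ρ N → E ⊗[k] H →ₗ[E] N) := fun g ↦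
  ⟨g.restrictScalars k ∘ₗ TensorProduct.mk k E H 1, by
    ext x
    exact one_smul E _⟩

end Extend

end CoactionHom

end CoactionHom

section Coaction

open CategoryTheory Coalgebra HopfAlgebra

variable {E : Type} [Ring E] [Algebra k E] {ρ : E →ₐ[k] E ⊗[k] H} {N : Type} [AddCommGroup N]
  [Module k N]

namespace CoactionHom

theorem apply_eq_counit_smul {M : Type} [AddCommGroup M] [Module k M]
    (φ : TrivialModule k H M →ₗ[H] CoactionHom ρ N) (m : TrivialModule k H M) (x : H) :
    φ m x = counit (R := k) x • φ m 1 := by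
  have hinv := map_smul (uncurry φ) x (DiagonalTensor.mk m 1)
  rw [DiagonalTensor.smul_mk_trivialModule, mul_one] at hinv
  exact hinv

variable [Module E N] [IsScalarTower k E N]

/-- Evaluation of the invariants of `Hom_k(H, N)`, viewed as maps from the trivial module, at the
unit. -/
def evalOne (hρ : ∀ e, TensorProduct.rid k E ((counit (R := k)).lTensor E (ρ e)) = e) :
    (TrivialModule k H k →ₗ[H] CoactionHom ρ N) →ₗ[E] N where
  toFun φ := φ (TrivialModule.of k H k 1) 1
  map_add' _ _ := rfl
  map_smul' e φ := by
    obtain ⟨n, u, v, he⟩ := TensorProduct.exists_sum_tmul_eq (ρ e)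
    have hcounit : ∑ i, counit (R := k) (v i) • u i = e := by simpa [he] using hρ e
    refine (smul_apply_eq_sum he (φ (TrivialModule.of k H k 1)) 1).trans ?_
    conv_rhs => rw [RingHom.id_apply, ← hcounit, Finset.sum_smul]
    refine Finset.sum_congr rfl fun i _ ↦ ?_
    rw [one_mul, apply_eq_counit_smul φ _ (v i), smul_assoc, smul_comm]

theorem evalOne_bijective
    (hρ : ∀ e, TensorProduct.rid k E ((counit (R := k)).lTensor E (ρ e)) = e) :
    Function.Bijective (evalOne (N := N) hρ) := by
  constructor
  · intro φ ψ hφψ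
    have hone : φ (TrivialModule.of k H k 1) = ψ (TrivialModule.of k H k 1) := ext fun x ↦ by
      rw [apply_eq_counit_smul φ, apply_eq_counit_smul ψ]
      exact congrArg _ hφψ
    refine LinearMap.ext fun c ↦ ?_
    rw [← (TrivialModule.of k H k).apply_symm_apply c, ← mul_one ((TrivialModule.of k H k).symm c),
      ← smul_eq_mul, map_smul, LinearMap.map_smul_of_tower, LinearMap.map_smul_of_tower, hone]
  · intro n
    refine ⟨{ toFun := fun c ↦ (LinearMap.toSpanSingleton k N
                ((TrivialModule.of k H k).symm c • n) ∘ₗ counit : H →ₗ[k] N)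
              map_add' := fun c d ↦ ext fun x ↦ ?_
              map_smul' := fun h c ↦ ext fun x ↦ ?_ }, ?_⟩
    · exact (congrArg _ (add_smul _ _ _)).trans (smul_add (counit (R := k) x) _ _)
    · change counit (R := k) x • (counit (R := k) h * (TrivialModule.of k H k).symm c) • n =
        counit (R := k) (antipode k h * x) • (TrivialModule.of k H k).symm c • n
      simp only [Bialgebra.counit_mul, counit_antipode, mul_smul]
      rw [smul_comm]
    · change counit (R := k) (1 : H) • (1 : k) • n = n
      rw [Bialgebra.counit_one, one_smul, one_smul]

end CoactionHom

theorem hasInjectiveDimensionLE_linearMap_of_projective {d : ℕ}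
    (hb : ∀ (N : Type) [AddCommGroup N] [Module k N] [Module E N] [IsScalarTower k E N],
      HasInjectiveDimensionLE (ModuleCat.of E (CoactionHom ρ N)) d)
    [Module E N] [IsScalarTower k E N] {V : Type} [AddCommGroup V] [Module H V]
    (hV : Module.Projective H V) :
    HasInjectiveDimensionLE (ModuleCat.of E (V →ₗ[H] CoactionHom ρ N)) d := by
  obtain ⟨i, r, hri⟩ := exists_linearMap_retract_pi (S := E) (M := CoactionHom ρ N) hV
  refine hasInjectiveDimensionLE_of_comp_eq_id hri ?_
  exact (ModuleCat.hasInjectiveDimensionLE_iff_of_linearEquiv (M := .of E (CoactionHom ρ (V → N)))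
    (N := .of E (V → CoactionHom ρ N)) (CoactionHom.piEquiv ρ N V) d).1 (hb (V → N))

theorem hasInjectiveDimensionLE_linearMap [Module.Projective k H] {d : ℕ}
    (hb : ∀ (N : Type) [AddCommGroup N] [Module k N] [Module E N] [IsScalarTower k E N],
      HasInjectiveDimensionLE (ModuleCat.of E (CoactionHom ρ N)) d)
    [Module E N] [IsScalarTower k E N] {n : ℕ} {V : Type} [AddCommGroup V] [Module k V]
    [Module H V] [IsScalarTower k H V] (hVH : Module.Projective H (DiagonalTensor k H V))
    (hV : PdLE H n V) :
    HasInjectiveDimensionLE (ModuleCat.of E (V →ₗ[H] CoactionHom ρ N)) (d + n) := by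
  induction n generalizing V with
  | zero => exact hasInjectiveDimensionLE_linearMap_of_projective hb hV
  | succ n ih =>
    obtain ⟨P, _, _, p, hP, hp, hK⟩ := hV
    let _ : Module k P := Module.compHom P (algebraMap k H)
    have : IsScalarTower k H P := .of_algebraMap_smul fun _ _ ↦ rfl
    have hexact := p.exact_subtype_ker_map
    have hinj := (LinearMap.ker p).injective_subtype
    obtain ⟨r, hr⟩ := DiagonalTensor.exists_leftInverse_map hinj hp hexact hVH
    have hKH : Module.Projective H (DiagonalTensor k H (LinearMap.ker p)) :=
      have := DiagonalTensor.projective (k := k) hP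
      .of_split _ r hr
    have hPd := hasInjectiveDimensionLE_linearMap_of_projective (N := N) hb hP
    exact hasInjectiveDimensionLE_of_exact (LinearMap.lcomp_injective_of_surjective p hp)
      (exact_lcomp hexact hp) (CoactionHom.exists_comp_eq_of_leftInverse_map hr)
      (hasInjectiveDimensionLT_of_ge _ (d + 1) _ (show d + 1 ≤ d + n + 1 + 1 by omega)) (ih hKH hK)

theorem glDimLE_of_coaction [Module.Projective k H] {d dH : ℕ}
    (hρ : ∀ e, TensorProduct.rid k E ((counit (R := k)).lTensor E (ρ e)) = e)
    (hb : ∀ (N : Type) [AddCommGroup N] [Module k N] [Module E N] [IsScalarTower k E N],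
      HasInjectiveDimensionLE (ModuleCat.of E (CoactionHom ρ N)) d)
    (hH : GlDimLE H dH) : GlDimLE E (d + dH) := by
  refine glDimLE_iff_hasInjectiveDimensionLE.2 fun N ↦ ?_
  let _ : Module k N := Module.compHom N (algebraMap k E)
  have : IsScalarTower k E N := .of_algebraMap_smul fun _ _ ↦ rfl
  let e : (TrivialModule k H k →ₗ[H] CoactionHom ρ N) ≃ₗ[E] N :=
    .ofBijective _ (CoactionHom.evalOne_bijective hρ)
  exact (ModuleCat.hasInjectiveDimensionLE_iff_of_linearEquiv
    (M := .of E (TrivialModule k H k →ₗ[H] CoactionHom ρ N)) e _).1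
    (hasInjectiveDimensionLE_linearMap hb DiagonalTensor.projective_trivialModule (hH _))

end Coaction

section SweedlerSums

open Coalgebra

theorem sum_equivFin_symm {κ M : Type} [AddCommMonoid M] (s : Finset κ) (F : κ → M) :
    ∑ i : Fin s.card, F (s.equivFin.symm i) = ∑ i ∈ s, F i := by
  rw [← Finset.sum_coe_sort s, ← s.equivFin.symm.sum_comp]

theorem sRep_equivFin_symm {n : ℕ} {κ : Type} (s : Finset κ) (u : κ → Fin (n + 1) → H) {h : H}
    (hh : itComul k n h = ∑ i ∈ s, tp k (u i)) :
    SRep k n h s.card fun i ↦ u (s.equivFin.symm i) :=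
  hh.trans (sum_equivFin_symm s fun i ↦ tp k (u i)).symm

theorem itComul_one {ι : Type} {h : H} (r : Repr k h ι) :
    itComul k 1 h = ∑ i ∈ r.index, tp k ![r.left i, r.right i] := by
  change TensorProduct.map LinearMap.id (TensorProduct.rid k H).symm.toLinearMap
    (comul (R := k) h) = ∑ i ∈ r.index, r.left i ⊗ₜ[k] (r.right i ⊗ₜ[k] (1 : k))
  simp [← r.eq]

theorem itComul_two {ι : Type} {κ : ι → Type} {h : H} (r : Repr k h ι)
    (q : ∀ i, Repr k (r.right i) (κ i)) :
    itComul k 2 h = ∑ x ∈ r.index.sigma fun i ↦ (q i).index,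
      tp k ![r.left x.1, (q x.1).left x.2, (q x.1).right x.2] := by
  change TensorProduct.map LinearMap.id (itComul k 1) (comul (R := k) h) = _
  rw [Finset.sum_sigma, ← r.eq, map_sum]
  refine Finset.sum_congr rfl fun i _ ↦ ?_
  rw [map_tmul, itComul_one (q i), tmul_sum]
  rfl

end SweedlerSums

section ConvolutionInverse

open Coalgebra WithConv

theorem lift_convMul_lift_eq_one {f g : H →ₗ[k] H →ₗ[k] A}
    (hfg : ∀ h l : H, ∑ i ∈ (ℛ k h).index, ∑ j ∈ (ℛ k l).index,
      f ((ℛ k h).left i) ((ℛ k l).left j) * g ((ℛ k h).right i) ((ℛ k l).right j) =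
        (counit (R := k) h * counit (R := k) l) • (1 : A)) :
    toConv (TensorProduct.lift f) * toConv (TensorProduct.lift g) = 1 := by
  refine ofConv_injective (TensorProduct.ext' fun h l ↦ ?_)
  refine (((ℛ k h).tmul (ℛ k l)).convMul_apply _ _).trans ?_
  simp only [Repr.tmul, Finset.sum_product]
  refine (hfg h l).trans ?_
  rw [mul_comm, ← Algebra.algebraMap_eq_smul_one]
  rfl

theorem IsConvInverse.isUnit_lift {f g : H →ₗ[k] H →ₗ[k] A} (hfg : IsConvInverse f g) :
    IsUnit (toConv (TensorProduct.lift f)) := by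
  have hsum (F G : H →ₗ[k] H →ₗ[k] A) {h l : H} {ι κ : Type} (r : Repr k h ι) (t : Repr k l κ) :
      ∑ i ∈ r.index, ∑ j ∈ t.index, F (r.left i) (t.left j) * G (r.right i) (t.right j) =
        ∑ x, ∑ y, F (r.left (r.index.equivFin.symm x)) (t.left (t.index.equivFin.symm y)) *
          G (r.right (r.index.equivFin.symm x)) (t.right (t.index.equivFin.symm y)) := by
    rw [← sum_equivFin_symm r.index]
    exact Finset.sum_congr rfl fun x _ ↦ (sum_equivFin_symm t.index _).symm
  have hinv (h l : H) := hfg h l _ _ _ _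
    (sRep_equivFin_symm _ _ (itComul_one (ℛ k h))) (sRep_equivFin_symm _ _ (itComul_one (ℛ k l)))
  exact ⟨⟨_, toConv (TensorProduct.lift g),
    lift_convMul_lift_eq_one fun h l ↦ (hsum f g _ _).trans (hinv h l).1,
    lift_convMul_lift_eq_one fun h l ↦ (hsum g f _ _).trans (hinv h l).2⟩, rfl⟩

end ConvolutionInverse

namespace CrossedProduct

open CategoryTheory Coalgebra LinearMap WithConv

variable {E : Type} [Ring E] [Algebra k E] (S : CrossedProduct k A H E)

theorem ι_mul_ι (a b : A) {h l : H} {ι κ : Type} (r : Repr k h ι) (q : ∀ i, Repr k (r.right i) κ)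
    {ι' : Type} (t : Repr k l ι') :
    S.ι (a ⊗ₜ h) * S.ι (b ⊗ₜ l) = ∑ i ∈ r.index, ∑ j ∈ (q i).index, ∑ m ∈ t.index,
      S.ι ((a * S.act (r.left i) b * S.f ((q i).left j) (t.left m)) ⊗ₜ
        ((q i).right j * t.right m)) := by
  let F (x : (_ : ι) × κ) (m : ι') : E :=
    S.ι ((a * S.act (r.left x.1) b * S.f ((q x.1).left x.2) (t.left m)) ⊗ₜ
      ((q x.1).right x.2 * t.right m))
  calc S.ι (a ⊗ₜ h) * S.ι (b ⊗ₜ l)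
    _ = ∑ x, ∑ y, F ((r.index.sigma fun i ↦ (q i).index).equivFin.symm x)
          (t.index.equivFin.symm y) := by
      rw [S.ι_mul a b h l _ _ _ _ (sRep_equivFin_symm _ _ (itComul_two r q))
        (sRep_equivFin_symm _ _ (itComul_one t))]
      rfl
    _ = ∑ x ∈ r.index.sigma fun i ↦ (q i).index, ∑ m ∈ t.index, F x m :=
      (Finset.sum_congr rfl fun _ _ ↦ sum_equivFin_symm t.index (F _)).trans
        (sum_equivFin_symm _ fun x ↦ ∑ m ∈ t.index, F x m)
    _ = _ := Finset.sum_sigma _ _ _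

variable (k H) in
/-- The decomposition `Δ(1) = 1 ⊗ 1`. -/
def oneRepr : Repr k (1 : H) Unit where
  index := {()}
  left _ := 1
  right _ := 1
  eq := by rw [Finset.sum_singleton, Bialgebra.comul_one, Algebra.TensorProduct.one_def]

theorem aE_mul_ι (a b : A) (h : H) : S.aE a * S.ι (b ⊗ₜ h) = S.ι ((a * b) ⊗ₜ h) := by
  refine (S.ι_mul_ι a b (oneRepr k H) (fun _ ↦ oneRepr k H) (ℛ k h)).trans ?_
  simp only [oneRepr, Finset.sum_singleton, S.one_act, (S.f_normal _).2, mul_smul_comm, mul_one,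
    one_mul, TensorProduct.smul_tmul]
  rw [← map_sum, ← tmul_sum, sum_counit_smul]

theorem ι_mul_hE (a : A) (g h : H) :
    S.ι (a ⊗ₜ g) * S.hE h = S.ι ((mul' k H).lTensor A
      (leftTwist (toConv (TensorProduct.lift S.f)) (a ⊗ₜ (g ⊗ₜ h)))) := by
  let Θ : H →ₗ[k] E := S.ι.toLinearMap ∘ₗ (mul' k H).lTensor A ∘ₗ
    (leftTwist (toConv (TensorProduct.lift S.f))).restrictScalars k ∘ₗ
      TensorProduct.mk k A _ a ∘ₗ (TensorProduct.mk k H H).flip h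
  have hΘ (y : H) : Θ y = ∑ j ∈ (ℛ k y).index, ∑ m ∈ (ℛ k h).index,
      S.ι ((a * S.f ((ℛ k y).left j) ((ℛ k h).left m)) ⊗ₜ
        ((ℛ k y).right j * (ℛ k h).right m)) := by
    change S.ι ((mul' k H).lTensor A (leftTwist _ (a ⊗ₜ (y ⊗ₜ h)))) = _
    rw [leftTwist_tmul _ a ((ℛ k y).tmul (ℛ k h))]
    simp [Repr.tmul, Finset.sum_product]
  change S.ι (a ⊗ₜ g) * S.ι (1 ⊗ₜ h) = Θ g
  rw [S.ι_mul_ι a 1 (ℛ k g) (fun i ↦ ℛ k _) (ℛ k h)]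
  conv_rhs => rw [← sum_counit_smul (ℛ k g), map_sum]
  refine Finset.sum_congr rfl fun i _ ↦ ?_
  simp only [map_smul Θ, hΘ, Finset.smul_sum, S.act_one, mul_smul_comm, mul_one, smul_mul_assoc,
    ← smul_tmul', map_smul]

theorem ι_mul_aE (a b : A) (g : H) :
    S.ι (a ⊗ₜ g) * S.aE b = S.ι (leftTwist (toConv (S.act.flip b)) (a ⊗ₜ g)) := by
  refine (S.ι_mul_ι a b (ℛ k g) (fun i ↦ ℛ k _) (oneRepr k H)).trans ?_
  rw [leftTwist_tmul _ a (ℛ k g), map_sum]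
  refine Finset.sum_congr rfl fun i _ ↦ ?_
  simp only [oneRepr, Finset.sum_singleton, (S.f_normal _).1, mul_smul_comm, mul_one,
    TensorProduct.smul_tmul]
  rw [← map_sum, ← tmul_sum, sum_counit_smul]
  rfl

theorem aE_mul_hE (a : A) (h : H) : S.aE a * S.hE h = S.ι (a ⊗ₜ h) :=
  (S.aE_mul_ι a 1 h).trans (by rw [mul_one])

@[elab_as_elim]
theorem induction_on {p : E → Prop} (x : E) (zero : p 0) (ι_tmul : ∀ a h, p (S.ι (a ⊗ₜ h)))
    (add : ∀ x y, p x → p y → p (x + y)) : p x := by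
  obtain ⟨t, rfl⟩ := S.ι.surjective x
  induction t with
  | zero => rwa [map_zero]
  | add t u ht hu => rw [map_add]; exact add _ _ ht hu
  | tmul a h => exact ι_tmul a h

/-- The inclusion `A → E`, `a ↦ a # 1`, as a homomorphism of algebras. -/
def aAlgHom : A →ₐ[k] E :=
  .ofLinearMap S.aE S.ι_one fun a b ↦ (S.aE_mul_ι a b 1).symm

theorem projective_restrictScalars [Module.Projective k H] :
    Module.Projective A ((ModuleCat.restrictScalars S.aAlgHom.toRingHom).obj (.of E E)) := by
  let _ : Module A E := Module.compHom E S.aAlgHom.toRingHom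
  let e : A ⊗[k] H ≃ₗ[A] E :=
    { S.ι with
      map_smul' := fun a t ↦ by
        change S.ι (a • t) = S.aE a * S.ι t
        induction t with
        | zero => simp only [smul_zero, map_zero, mul_zero]
        | add t u ht hu => simp only [smul_add, map_add, mul_add, ht, hu]
        | tmul b h => rw [S.aE_mul_ι, smul_tmul', smul_eq_mul] }
  exact .of_equiv e

/-- The identification `a ⊗ (g ⊗ h) ↦ (a # g) ⊗ h` of `A ⊗ (H ⊗ H)` with `E ⊗ H`. -/
def assocι : A ⊗[k] (H ⊗[k] H) ≃ₗ[k] E ⊗[k] H :=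
  (TensorProduct.assoc k A H H).symm ≪≫ₗ S.ι.rTensor H

theorem assocι_tmul (a : A) (g h : H) : S.assocι (a ⊗ₜ (g ⊗ₜ h)) = S.ι (a ⊗ₜ g) ⊗ₜ h := by
  simp [assocι]

/-- The linear map underlying `coaction`. -/
def coactionLinear : E →ₗ[k] E ⊗[k] H :=
  S.assocι.toLinearMap ∘ₗ comul.lTensor A ∘ₗ S.ι.symm.toLinearMap

theorem coactionLinear_ι_tmul (a : A) {h : H} {ι : Type} (r : Repr k h ι) :
    S.coactionLinear (S.ι (a ⊗ₜ h)) = ∑ i ∈ r.index, S.ι (a ⊗ₜ r.left i) ⊗ₜ[k] r.right i := by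
  simp [coactionLinear, ← r.eq, tmul_sum, assocι_tmul]

theorem coactionLinear_aE (a : A) : S.coactionLinear (S.aE a) = S.aE a ⊗ₜ 1 :=
  S.coactionLinear_ι_tmul a (oneRepr k H)

theorem coactionLinear_hE {h : H} {ι : Type} (r : Repr k h ι) :
    S.coactionLinear (S.hE h) = ∑ i ∈ r.index, S.hE (r.left i) ⊗ₜ[k] r.right i :=
  S.coactionLinear_ι_tmul 1 r

theorem coactionLinear_ι_leftTwist {C : Type} [AddCommGroup C] [Module k C] [Coalgebra k C]
    (F : WithConv (C →ₗ[k] A)) (m : C →ₗc[k] H) (a : A) {c : C} {ι : Type} (r : Repr k c ι) :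
    S.coactionLinear (S.ι ((m : C →ₗ[k] H).lTensor A (leftTwist F (a ⊗ₜ c)))) =
      ∑ i ∈ r.index,
        S.ι ((m : C →ₗ[k] H).lTensor A (leftTwist F (a ⊗ₜ r.left i))) ⊗ₜ m (r.right i) := by
  have hcoassoc := congrArg
    (S.assocι.toLinearMap ∘ₗ TensorProduct.map (mulLeft k a ∘ₗ F.ofConv)
      (TensorProduct.map (m : C →ₗ[k] H) m))
    (sum_tmul_tmul_eq r (fun i ↦ ℛ k (r.left i)) (fun i ↦ ℛ k (r.right i)))
  simp only [map_sum, LinearMap.comp_apply, LinearEquiv.coe_coe, map_tmul, assocι_tmul,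
    mulLeft_apply] at hcoassoc
  simp only [leftTwist_tmul F a r, fun i ↦ leftTwist_tmul F a (ℛ k (r.left i)), map_sum,
    lTensor_tmul, sum_tmul]
  refine Eq.trans (Finset.sum_congr rfl fun i _ ↦ ?_) hcoassoc.symm
  exact S.coactionLinear_ι_tmul _ ((ℛ k (r.right i)).induced m)

theorem coactionLinear_mul_hE (x : E) (h : H) :
    S.coactionLinear (x * S.hE h) = S.coactionLinear x * S.coactionLinear (S.hE h) := by
  induction x using S.induction_on with
  | zero => simp only [zero_mul, map_zero]
  | add x y hx hy => simp only [add_mul, map_add, hx, hy]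
  | ι_tmul a g =>
    rw [S.ι_mul_hE, S.coactionLinear_ι_tmul a (ℛ k g), S.coactionLinear_hE (ℛ k h),
      Finset.sum_mul_sum]
    refine (S.coactionLinear_ι_leftTwist _ (Bialgebra.mulCoalgHom k H) a
      ((ℛ k g).tmul (ℛ k h))).trans ?_
    simp only [Repr.tmul, Finset.sum_product, Algebra.TensorProduct.tmul_mul_tmul, S.ι_mul_hE]
    rfl

theorem coactionLinear_mul_aE (x : E) (b : A) :
    S.coactionLinear (x * S.aE b) = S.coactionLinear x * S.coactionLinear (S.aE b) := by
  induction x using S.induction_on with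
  | zero => simp only [zero_mul, map_zero]
  | add x y hx hy => simp only [add_mul, map_add, hx, hy]
  | ι_tmul a g =>
    rw [S.ι_mul_aE, S.coactionLinear_ι_tmul a (ℛ k g), S.coactionLinear_aE, Finset.sum_mul]
    simpa [S.ι_mul_aE] using
      S.coactionLinear_ι_leftTwist (toConv (S.act.flip b)) (CoalgHom.id k H) a (ℛ k g)

/-- The coaction `a # h ↦ (a # h⁽¹⁾) ⊗ h⁽²⁾` making `E` an `H`-comodule algebra. -/
def coaction : E →ₐ[k] E ⊗[k] H :=
  .ofLinearMap S.coactionLinear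
    (by
      have hone : S.aE 1 = 1 := S.ι_one
      rw [← hone, S.coactionLinear_aE, hone]
      rfl)
    fun x y ↦ by
      induction y using S.induction_on with
      | zero => simp only [mul_zero, map_zero]
      | add y z hy hz => simp only [mul_add, map_add, hy, hz]
      | ι_tmul a g =>
        rw [← S.aE_mul_hE, ← mul_assoc, S.coactionLinear_mul_hE, S.coactionLinear_mul_aE,
          S.coactionLinear_mul_hE, mul_assoc]

theorem rid_lTensor_counit_coaction (e : E) :
    TensorProduct.rid k E ((counit (R := k)).lTensor E (S.coaction e)) = e := by
  induction e using S.induction_on with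
  | zero => simp only [map_zero]
  | add x y hx hy => simp only [map_add, hx, hy]
  | ι_tmul a g =>
    have hcounit := congrArg (TensorProduct.rid k E ∘ (counit (R := k)).lTensor E)
      (S.coactionLinear_ι_tmul a (ℛ k g))
    refine hcounit.trans ?_
    have hcounit_right := congrArg (TensorProduct.rid k H) (sum_tmul_counit_eq (ℛ k g))
    simp only [map_sum, rid_tmul, one_smul] at hcounit_right
    simp only [Function.comp_apply, map_sum, lTensor_tmul, rid_tmul, ← map_smul, ← tmul_smul]
    rw [← map_sum, ← tmul_sum, hcounit_right]

theorem leftTwist_hE_assocι_tmul (a : A) (g h : H) :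
    leftTwist (toConv S.hE) (S.assocι (a ⊗ₜ (g ⊗ₜ h))) =
      S.assocι (((leftTwist (toConv (LinearMap.id : H →ₗ[k] H))).restrictScalars k).lTensor A
        (leftTwist (toConv (TensorProduct.lift S.f)) (a ⊗ₜ (g ⊗ₜ h)))) := by
  have hcoassoc (i) := congrArg (S.assocι.toLinearMap ∘ₗ TensorProduct.map
      (mulLeft k a ∘ₗ S.f ((ℛ k g).left i)) ((mulLeft k ((ℛ k g).right i)).rTensor H))
    (sum_tmul_tmul_eq (ℛ k h) (fun i ↦ ℛ k ((ℛ k h).left i)) (fun i ↦ ℛ k ((ℛ k h).right i)))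
  simp only [map_sum, LinearMap.comp_apply, LinearEquiv.coe_coe, map_tmul, rTensor_tmul,
    assocι_tmul, mulLeft_apply] at hcoassoc
  simp only [assocι_tmul, leftTwist_tmul _ _ (ℛ k h), ι_mul_hE]
  simp only [fun x ↦ leftTwist_tmul (toConv (TensorProduct.lift S.f)) a ((ℛ k g).tmul (ℛ k x)),
    Repr.tmul, Finset.sum_product, map_sum, lTensor_tmul, coe_restrictScalars,
    fun b i ↦ leftTwist_tmul (toConv LinearMap.id) b (ℛ k ((ℛ k h).right i)),
    tmul_sum, sum_tmul]
  rw [Finset.sum_comm]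
  exact Finset.sum_congr rfl fun i _ ↦ hcoassoc i

theorem leftTwist_hE_bijective {finv : H →ₗ[k] H →ₗ[k] A} (hfinv : IsConvInverse S.f finv) :
    Function.Bijective (leftTwist (toConv S.hE)) := by
  have hid : IsUnit (toConv (LinearMap.id : H →ₗ[k] H)) :=
    ⟨⟨_, toConv (HopfAlgebra.antipode k), id_mul_antipode, antipode_mul_id⟩, rfl⟩
  have hfactor : leftTwist (toConv S.hE) ∘ S.assocι = S.assocι ∘
      ((leftTwist (toConv LinearMap.id)).restrictScalars k).lTensor A ∘
        leftTwist (toConv (TensorProduct.lift S.f)) := funext fun t ↦ by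
    simp only [Function.comp_apply]
    induction t with
    | zero => simp only [map_zero]
    | add t u ht hu => simp only [map_add, ht, hu]
    | tmul a t =>
      induction t with
      | zero => simp only [tmul_zero, map_zero]
      | add t u ht hu => simp only [tmul_add, map_add, ht, hu]
      | tmul g h => exact S.leftTwist_hE_assocι_tmul a g h
  rw [← Function.Bijective.of_comp_iff _ S.assocι.bijective, hfactor]
  exact S.assocι.bijective.comp <|
    (((LinearEquiv.ofBijective _ (leftTwist_bijective hid)).restrictScalars k).lTensor
      A).bijective.comp (leftTwist_bijective hfinv.isUnit_lift)

variable {N : Type} [AddCommGroup N] [Module k N] [Module E N] [IsScalarTower k E N]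

theorem aE_smul_coactionHom_apply (a : A) (φ : CoactionHom S.coaction N) (x : H) :
    (S.aE a • φ) x = S.aE a • φ x := by
  have hcoaction : S.coaction (S.aE a) = ∑ _i ∈ {()}, S.aE a ⊗ₜ 1 :=
    (S.coactionLinear_aE a).trans (Finset.sum_singleton ..).symm
  rw [CoactionHom.smul_apply_eq_sum hcoaction, Finset.sum_singleton, mul_one]

theorem hE_smul_coactionHom_apply {h : H} {ι : Type} (r : Repr k h ι)
    (φ : CoactionHom S.coaction N) (x : H) :
    (S.hE h • φ) x = ∑ i ∈ r.index, S.hE (r.left i) • φ (x * r.right i) :=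
  CoactionHom.smul_apply_eq_sum (S.coactionLinear_hE r) φ x

theorem extend_leftTwist_hE_tmul (φ : CoactionHom S.coaction N) (e : E) (h : H) :
    φ.extend (leftTwist (toConv S.hE) (e ⊗ₜ h)) = e • (S.hE h • φ) 1 := by
  rw [leftTwist_tmul _ e (ℛ k h), S.hE_smul_coactionHom_apply (ℛ k h), map_sum, Finset.smul_sum]
  refine Finset.sum_congr rfl fun i _ ↦ ?_
  rw [one_mul, CoactionHom.extend_tmul, mul_smul]

theorem eq_of_smul_coactionHom_apply_one_eq {finv : H →ₗ[k] H →ₗ[k] A}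
    (hfinv : IsConvInverse S.f finv) {φ φ' : CoactionHom S.coaction N}
    (h : ∀ e : E, (e • φ) 1 = (e • φ') 1) : φ = φ' := by
  have hcomp : φ.extend ∘ₗ leftTwist (toConv S.hE) = φ'.extend ∘ₗ leftTwist (toConv S.hE) := by
    ext x
    simp [extend_leftTwist_hE_tmul, h]
  exact CoactionHom.extend_injective
    ((LinearMap.cancel_right (S.leftTwist_hE_bijective hfinv).surjective).1 hcomp)

theorem exists_smul_coactionHom_apply_one_eq {finv : H →ₗ[k] H →ₗ[k] A}
    (hfinv : IsConvInverse S.f finv) (ψ : E →+ N)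
    (hψ : ∀ a e, ψ (S.aE a * e) = S.aE a • ψ e) :
    ∃ φ : CoactionHom S.coaction N, ∀ e : E, (e • φ) 1 = ψ e := by
  have hψ_smul (c : k) (e : E) : ψ (c • e) = c • ψ e := by
    have haE : S.aE (c • 1) = c • 1 := (map_smul S.aE c 1).trans (congrArg (c • ·) S.ι_one)
    simpa [haE] using hψ (c • 1) e
  let ψH : H →ₗ[k] N := { ψ.comp S.hE.toAddMonoidHom with
    map_smul' := fun c x ↦ (congrArg ψ (map_smul S.hE c x)).trans (hψ_smul c _) }
  let twist := LinearEquiv.ofBijective _ (S.leftTwist_hE_bijective hfinv)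
  obtain ⟨φ, hφ⟩ := CoactionHom.extend_surjective (ρ := S.coaction)
    (CoactionHom.extend (ρ := S.coaction) ψH ∘ₗ twist.symm.toLinearMap)
  refine ⟨φ, fun e ↦ ?_⟩
  have hφ_hE (x : H) : (S.hE x • φ) 1 = ψ (S.hE x) := by
    calc (S.hE x • φ) 1
      _ = φ.extend (twist (1 ⊗ₜ x)) :=
        (one_smul E _).symm.trans (S.extend_leftTwist_hE_tmul φ 1 x).symm
      _ = CoactionHom.extend (ρ := S.coaction) ψH (1 ⊗ₜ x) := by
        rw [hφ, LinearMap.comp_apply, LinearEquiv.coe_coe, twist.symm_apply_apply]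
      _ = ψ (S.hE x) := one_smul E _
  induction e using S.induction_on with
  | zero => rw [zero_smul, map_zero]; rfl
  | add x y hx hy => rw [add_smul, map_add, ← hx, ← hy]; rfl
  | ι_tmul a x =>
    rw [← S.aE_mul_hE, mul_smul, S.aE_smul_coactionHom_apply, hφ_hE, hψ]

variable (N) in
/-- Evaluation at `1`, as an `A`-linear map `Hom_k(H, N) → N`. -/
def evalOne : (ModuleCat.restrictScalars S.aAlgHom.toRingHom).obj
      (.of E (CoactionHom S.coaction N)) ⟶
    (ModuleCat.restrictScalars S.aAlgHom.toRingHom).obj (.of E N) :=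
  letI : Module A (CoactionHom S.coaction N) := Module.compHom _ S.aAlgHom.toRingHom
  letI : Module A N := Module.compHom _ S.aAlgHom.toRingHom
  ModuleCat.ofHom (X := CoactionHom S.coaction N) (Y := N)
    { toFun := fun φ ↦ φ 1
      map_add' := fun _ _ ↦ rfl
      map_smul' := fun a φ ↦ S.aE_smul_coactionHom_apply a φ 1 }

variable (N) in
/-- The `E`-linear map `Hom_k(H, N) → Hom_A(E, N)`, `φ ↦ (e ↦ (e φ)(1))`. -/
def toCoextended : CoactionHom S.coaction N →ₗ[E]
    (ModuleCat.coextendScalars S.aAlgHom.toRingHom).obj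
      ((ModuleCat.restrictScalars S.aAlgHom.toRingHom).obj (.of E N)) :=
  (ModuleCat.RestrictionCoextensionAdj.HomEquiv.fromRestriction _ (S.evalOne N)).hom

theorem toCoextended_apply (φ : CoactionHom S.coaction N) (e : E) :
    (S.toCoextended N φ e : N) = (e • φ) 1 := rfl

theorem toCoextended_bijective {finv : H →ₗ[k] H →ₗ[k] A} (hfinv : IsConvInverse S.f finv) :
    Function.Bijective (S.toCoextended N) := by
  refine ⟨fun φ φ' h ↦ S.eq_of_smul_coactionHom_apply_one_eq hfinv fun e ↦ ?_, fun ψ ↦ ?_⟩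
  · rw [← S.toCoextended_apply, h, S.toCoextended_apply]
  · let ψ' := ModuleCat.CoextendScalars.equiv S.aAlgHom.toRingHom _ ψ
    obtain ⟨φ, hφ⟩ := S.exists_smul_coactionHom_apply_one_eq hfinv (N := N) ψ'.toAddMonoidHom
      (map_smul ψ')
    exact ⟨φ, ModuleCat.CoextendScalars.ext (LinearMap.ext hφ)⟩

theorem hasInjectiveDimensionLE_coactionHom [Module.Projective k H] {finv : H →ₗ[k] H →ₗ[k] A}
    (hfinv : IsConvInverse S.f finv) {d : ℕ} (hA : GlDimLE A d) :
    HasInjectiveDimensionLE (ModuleCat.of E (CoactionHom S.coaction N)) d :=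
  (ModuleCat.hasInjectiveDimensionLE_iff_of_linearEquiv
    (.ofBijective _ (S.toCoextended_bijective (N := N) hfinv)) d).2
      (hasInjectiveDimensionLE_coextendScalars _ S.projective_restrictScalars
        (glDimLE_iff_hasInjectiveDimensionLE.1 hA _))

end CrossedProduct

theorem glDim_crossedProduct_le_general
    {k A H E : Type} [CommRing k] [Ring A] [Algebra k A] [Ring H] [HopfAlgebra k H]
    [Module.Projective k H] [Ring E] [Algebra k E] (S : CrossedProduct k A H E)
    (finv : H →ₗ[k] H →ₗ[k] A) (hfinv : IsConvInverse S.f finv) :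
    ∀ (dA dH : ℕ), GlDimLE A dA → GlDimLE H dH → GlDimLE E (dA + dH) := fun _ _ hA hH ↦
  glDimLE_of_coaction S.rid_lTensor_counit_coaction
    (fun _ ↦ S.hasInjectiveDimensionLE_coactionHom hfinv hA) hH

/-- **Global dimension of a crossed product.**
Let `k` be a field and `E = A #_f H` a crossed product with convolution invertible
cocycle `f`.  Then `gl.dim(E) ≤ gl.dim(A) + gl.dim(H)`, where `gl.dim` denotes the left
global dimension. -/
theorem glDim_crossedProduct_le
    {k A H E : Type} [Field k] [Ring A] [Algebra k A] [Ring H] [HopfAlgebra k H]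
    [Ring E] [Algebra k E] (S : CrossedProduct k A H E)
    (finv : H →ₗ[k] H →ₗ[k] A) (hfinv : IsConvInverse S.f finv) :
    ∀ (dA dH : ℕ), GlDimLE A dA → GlDimLE H dH → GlDimLE E (dA + dH) := by
  exact glDim_crossedProduct_le_general S finv hfinv

end HopfCrossed
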